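/- arXiv:2007.02405 — 2 statements merged into one kernel-verified Lean document; each statement's English description precedes it below -/
import Mathlib

section
/- Let C be an [n, k, d]_q MDS code with minimum distance d ≥ 5, and let w be a natural number with d - 2 ≤ w ≤ n. Then the overall number A_w^Σ(V^{≤2}) of Hamming-weight-w vectors lying in cosets of C of weight at most 2 satisfies, as an identity of rational numbers, A_w^Σ(V^{≤2}) = C(n,w) · [ ∑_{j=0}^{w-d} (-1)^j C(w,j) ( q^{w-d+1-j} · V_n(2) - V_{w-j}(2) ) - ε · ((n-d+1)(q-1)/2) · ( C(w, d-1) (2 + (q-1)(n+d-2)) - C(w, d-2)(n-d+2) ) ]. -/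
open Finset

/-- The weight of the coset `x + C` of the linear code `C ⊆ F_q^n`, i.e. the smallest
Hamming weight of a vector in `x + C`; equivalently the Hamming distance from `x` to `C`. -/
noncomputable def cosetWeight {F : Type*} [Field F] [Fintype F] [DecidableEq F] {n : ℕ}
    (C : Submodule F (Fin n → F)) (x : Fin n → F) : ℕ :=
  sInf {m : ℕ | ∃ c ∈ C, hammingNorm (x - c) = m}

/-- `A_w(C)`: the number of codewords of `C` of Hamming weight `w`. -/
noncomputable def numCodewordsOfWeight {F : Type*} [Field F] [Fintype F] [DecidableEq F] {n : ℕ}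
    (C : Submodule F (Fin n → F)) (w : ℕ) : ℕ :=
  {x : Fin n → F | x ∈ C ∧ hammingNorm x = w}.ncard

/-- `A_w^Σ(V^{(W)})`: the overall number of Hamming-weight-`w` vectors of `F_q^n` lying in
cosets of `C` of weight exactly `W`. -/
noncomputable def numVectorsCosetExact {F : Type*} [Field F] [Fintype F] [DecidableEq F] {n : ℕ}
    (C : Submodule F (Fin n → F)) (w W : ℕ) : ℕ :=
  {x : Fin n → F | hammingNorm x = w ∧ cosetWeight C x = W}.ncard

/-- `A_w^Σ(V^{≤W})`: the overall number of Hamming-weight-`w` vectors of `F_q^n` lying in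
cosets of `C` of weight at most `W`. -/
noncomputable def numVectorsCosetLe {F : Type*} [Field F] [Fintype F] [DecidableEq F] {n : ℕ}
    (C : Submodule F (Fin n → F)) (w W : ℕ) : ℕ :=
  {x : Fin n → F | hammingNorm x = w ∧ cosetWeight C x ≤ W}.ncard

/-- The code `C` has minimum distance `d`: every nonzero codeword has Hamming weight at
least `d`, and some nonzero codeword has Hamming weight exactly `d`. -/
def HasMinDist {F : Type*} [Field F] [Fintype F] [DecidableEq F] {n : ℕ}
    (C : Submodule F (Fin n → F)) (d : ℕ) : Prop :=
  (∀ c ∈ C, c ≠ 0 → d ≤ hammingNorm c) ∧ ∃ c ∈ C, c ≠ 0 ∧ hammingNorm c = d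

/-- The code `C` has covering radius `R`: every vector of `F_q^n` is at Hamming distance at
most `R` from `C` and some vector is at Hamming distance exactly `R` from `C`. -/
def HasCoveringRadius {F : Type*} [Field F] [Fintype F] [DecidableEq F] {n : ℕ}
    (C : Submodule F (Fin n → F)) (R : ℕ) : Prop :=
  (∀ x : Fin n → F, cosetWeight C x ≤ R) ∧ ∃ x : Fin n → F, cosetWeight C x = R

/-- `V_m(t) = ∑_{i=0}^t (q-1)^i C(m,i)`, the volume of a Hamming sphere of radius `t`
in `F_q^m`, as a rational number. -/
def sphereVol (q m t : ℕ) : ℚ :=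
  ∑ i ∈ Finset.range (t + 1), ((q : ℚ) - 1) ^ i * (m.choose i : ℚ)

/-!
A vector of weight greater than `t` is within distance `t` of `C` exactly when it is within distance
`t` of a nonzero codeword, and if `2 * t < d` that codeword is unique. So for a set `S` of `m`
coordinates, the vectors supported on `S` that are close to a nonzero codeword can be counted
codeword by codeword. If `m ≥ d - 1`, write such a vector as `c + e` with `wt(e) ≤ t`: as `C` is
MDS, every error `e` occurs with exactly `q ^ (m + 1 - d)` codewords `c`, and the contribution of
`c = 0` is subtracted. If `m = d - t`, each of the `(q - 1) * C(n - m, t)` codewords of weight `d`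
whose support contains `S` contributes its restriction to `S`. If `m < d - t`, there are none. For
`t = 2` these cases cover all `m`, the count depends on `S` only through `m`, and
inclusion–exclusion over the supports of size `w` finishes.
-/

section InclusionExclusion

variable {α ι : Type*} [DecidableEq ι]

theorem sum_neg_one_pow_card_filter_subset_sdiff (A T : Finset ι) :
    ∑ U ∈ T.powerset with A ⊆ T \ U, (-1 : ℤ) ^ #U = if A = T then 1 else 0 := by
  by_cases hAT : A ⊆ T
  · have hfilter : {U ∈ T.powerset | A ⊆ T \ U} = (T \ A).powerset := by
      ext U
      simp only [mem_filter, mem_powerset, subset_sdiff, hAT, true_and, disjoint_comm]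
    rw [hfilter, sum_powerset_neg_one_pow_card]
    simp only [sdiff_eq_empty_iff_subset, Subset.antisymm_iff (s₁ := A), hAT, true_and]
  · rw [filter_false_of_mem fun U _ hA ↦ hAT (hA.trans sdiff_subset), sum_empty,
      if_neg fun h ↦ hAT h.subset]

theorem card_filter_eq_sum_powerset (B : Finset α) (s : α → Finset ι) (T : Finset ι) :
    (#{x ∈ B | s x = T} : ℤ) = ∑ U ∈ T.powerset, (-1) ^ #U * (#{x ∈ B | s x ⊆ T \ U} : ℤ) := by
  simp_rw [← sum_boole, ← sum_neg_one_pow_card_filter_subset_sdiff, mul_sum, mul_boole, sum_filter]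
  exact sum_comm

end InclusionExclusion

section HammingSupport

variable {ι M : Type*} [Fintype ι] [Zero M] [DecidableEq M]

/-- The support of a vector as a `Finset`; its cardinality is by definition the Hamming weight. -/
def hammingSupport (x : ι → M) : Finset ι := {i | x i ≠ 0}

@[simp]
theorem mem_hammingSupport {x : ι → M} {i : ι} : i ∈ hammingSupport x ↔ x i ≠ 0 := by
  simp [hammingSupport]

theorem card_hammingSupport (x : ι → M) : #(hammingSupport x) = hammingNorm x := rfl

theorem hammingSupport_subset_iff {x : ι → M} {S : Finset ι} :
    hammingSupport x ⊆ S ↔ ∀ i ∉ S, x i = 0 := by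
  simp only [subset_iff, mem_hammingSupport, not_imp_comm]

variable [DecidableEq ι]

theorem card_filter_hammingNorm_eq_of_supported_count {R : Type*} [CommRing R]
    (B : Finset (ι → M)) (N : ℕ → R)
    (hN : ∀ S : Finset ι, (#{x ∈ B | hammingSupport x ⊆ S} : R) = N #S) (w : ℕ) :
    (#{x ∈ B | hammingNorm x = w} : R) =
      (Fintype.card ι).choose w *
        ∑ j ∈ range (w + 1), (-1) ^ j * (w.choose j : R) * N (w - j) := by
  have hT : ∀ T ∈ powersetCard w (univ : Finset ι),
      (#{x ∈ B | hammingSupport x = T} : R) =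
        ∑ j ∈ range (w + 1), (-1) ^ j * (w.choose j : R) * N (w - j) := by
    intro T hT
    obtain ⟨-, rfl⟩ := mem_powersetCard.mp hT
    calc (#{x ∈ B | hammingSupport x = T} : R)
        = ∑ U ∈ T.powerset, (-1) ^ #U * (#{x ∈ B | hammingSupport x ⊆ T \ U} : R) := by
          exact_mod_cast congrArg (Int.cast (R := R)) (card_filter_eq_sum_powerset B _ T)
      _ = ∑ U ∈ T.powerset, (-1) ^ #U * N (#T - #U) :=
          sum_congr rfl fun U hU ↦ by rw [hN, card_sdiff_of_subset (mem_powerset.mp hU)]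
      _ = _ := by
          rw [sum_powerset_apply_card fun j ↦ (-1) ^ j * N (#T - j)]
          exact sum_congr rfl fun j _ ↦ by rw [nsmul_eq_mul]; ring
  have hfiber : #{x ∈ B | hammingNorm x = w} =
      ∑ T ∈ powersetCard w (univ : Finset ι), #{x ∈ B | hammingSupport x = T} := by
    rw [card_eq_sum_card_fiberwise (f := hammingSupport) (t := powersetCard w univ)
      fun x hx ↦ by simpa [card_hammingSupport] using (mem_filter.mp hx).2]
    refine sum_congr rfl fun T hT ↦ ?_
    obtain ⟨-, rfl⟩ := mem_powersetCard.mp hT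
    congr 1 with x
    simp only [mem_filter]
    grind [card_hammingSupport]
  rw [hfiber, Nat.cast_sum, sum_congr rfl hT, sum_const, card_powersetCard, card_univ,
    nsmul_eq_mul]

theorem hammingDist_eq_of_hammingSupport_subset {S : Finset ι} {x : ι → M}
    (hx : hammingSupport x ⊆ S) (c : ι → M) :
    hammingDist x c = #(hammingSupport c \ S) + #{i ∈ S | x i ≠ c i} := by
  rw [hammingDist, ← card_union_of_disjoint
    (disjoint_sdiff_self_left.mono_right (filter_subset _ S))]
  congr 1 with i
  by_cases hi : i ∈ S
  · simp [hi]
  · simp [hi, hammingSupport_subset_iff.mp hx i hi, eq_comm]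

variable [Fintype M]

theorem card_filter_hammingSupport_eq (T : Finset ι) :
    #{x : ι → M | hammingSupport x = T} = (Fintype.card M - 1) ^ #T := by
  have hpi : ({x : ι → M | hammingSupport x = T} : Finset _) =
      Fintype.piFinset fun i ↦ if i ∈ T then univ.erase 0 else {0} := by
    ext x
    simp only [mem_filter_univ, Fintype.mem_piFinset, Finset.ext_iff, mem_hammingSupport]
    refine forall_congr' fun i ↦ ?_
    by_cases hi : i ∈ T <;> simp [hi]
  simp_rw [hpi, Fintype.card_piFinset, apply_ite card, card_erase_of_mem (mem_univ _), card_univ,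
    card_singleton, prod_ite_mem, univ_inter, prod_const]

/-- The vectors supported on `S` at Hamming distance at most `t` from `c`; the centre `c` need not
be supported on `S`. -/
def supportedBall (S : Finset ι) (c : ι → M) (t : ℕ) : Finset (ι → M) :=
  {x | hammingSupport x ⊆ S ∧ hammingDist x c ≤ t}

theorem mem_supportedBall {S : Finset ι} {c x : ι → M} {t : ℕ} :
    x ∈ supportedBall S c t ↔ hammingSupport x ⊆ S ∧ hammingDist x c ≤ t := by
  simp [supportedBall]

theorem card_supportedBall_zero (S : Finset ι) (t : ℕ) :
    (#(supportedBall S (0 : ι → M) t) : ℚ) = sphereVol (Fintype.card M) #S t := by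
  have hmaps : ∀ x ∈ supportedBall S (0 : ι → M) t,
      hammingSupport x ∈ (range (t + 1)).biUnion (powersetCard · S) := by
    intro x hx
    simpa [mem_supportedBall, card_hammingSupport, Nat.lt_succ_iff, and_comm] using hx
  have hfiber : ∀ i ∈ range (t + 1), ∀ T ∈ powersetCard i S,
      #{x ∈ supportedBall S (0 : ι → M) t | hammingSupport x = T} = (Fintype.card M - 1) ^ i := by
    intro i hi T hT
    obtain ⟨hTS, rfl⟩ := mem_powersetCard.mp hT
    rw [← card_filter_hammingSupport_eq, supportedBall, filter_filter]
    congr 1 with x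
    simp only [mem_filter_univ, hammingDist_zero_right, ← card_hammingSupport]
    grind
  rw [card_eq_sum_card_fiberwise hmaps,
    sum_biUnion fun i _ j _ hij ↦ pairwise_disjoint_powersetCard S hij,
    sum_congr rfl fun i hi ↦ sum_congr rfl (hfiber i hi), sphereVol]
  simp [Nat.cast_sub (Fintype.card_pos (α := M)), mul_comm]

theorem supportedBall_eq_empty {S : Finset ι} {c : ι → M} {t : ℕ}
    (ht : t < #(hammingSupport c \ S)) : supportedBall S c t = ∅ := by
  refine eq_empty_of_forall_notMem fun x hx ↦ ?_
  obtain ⟨hxS, hxc⟩ := mem_supportedBall.mp hx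
  rw [hammingDist_eq_of_hammingSupport_subset hxS] at hxc
  lia

theorem supportedBall_eq_singleton {S : Finset ι} {c : ι → M} {t : ℕ}
    (ht : #(hammingSupport c \ S) = t) : supportedBall S c t = {S.piecewise c 0} := by
  ext x
  rw [mem_supportedBall, mem_singleton]
  constructor
  · rintro ⟨hxS, hxc⟩
    have hagree : {i ∈ S | x i ≠ c i} = ∅ := by
      rw [hammingDist_eq_of_hammingSupport_subset hxS] at hxc
      exact card_eq_zero.mp (by lia)
    funext i
    by_cases hi : i ∈ S
    · simpa [hi] using filter_eq_empty_iff.mp hagree hi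
    · simpa [hi] using hammingSupport_subset_iff.mp hxS i hi
  · rintro rfl
    have hsub : hammingSupport (S.piecewise c 0) ⊆ S :=
      hammingSupport_subset_iff.mpr fun i hi ↦ by simp [hi]
    have hagree : {i ∈ S | S.piecewise c 0 i ≠ c i} = ∅ :=
      filter_eq_empty_iff.mpr fun i hi ↦ by simp [hi]
    exact ⟨hsub, by rw [hammingDist_eq_of_hammingSupport_subset hsub, hagree, ht]; simp⟩

end HammingSupport

theorem card_supportedBall_eq_card_filter_add {ι G : Type*} [Fintype ι] [DecidableEq ι]
    [AddCommGroup G] [Fintype G] [DecidableEq G] (S : Finset ι) (c : ι → G) (t : ℕ) :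
    #(supportedBall S c t) = #{e ∈ supportedBall univ 0 t | hammingSupport (c + e) ⊆ S} :=
  card_equiv (Equiv.subRight c) fun x ↦ by
    simp [mem_supportedBall, hammingDist_eq_hammingNorm, neg_add_eq_sub, and_comm]

theorem card_fiber_eq_pow_of_surjective {K V W : Type*} [DivisionRing K] [Fintype K]
    [AddCommGroup V] [Module K V] [Fintype V] [AddCommGroup W] [Module K W] [DecidableEq W]
    {f : V →ₗ[K] W} (hf : Function.Surjective f) (w : W) :
    #{v | f v = w} = Fintype.card K ^ (Module.finrank K V - Module.finrank K W) := by
  have hrank : Module.finrank K (LinearMap.ker f) = Module.finrank K V - Module.finrank K W := by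
    rw [← f.finrank_range_add_finrank_ker, LinearMap.range_eq_top.mpr hf, finrank_top,
      Nat.add_sub_cancel_left]
  calc #{v | f v = w} = #{v | f v = 0} :=
        AddMonoidHom.card_fiber_eq_of_mem_range f (hf w) (hf 0)
    _ = Nat.card (LinearMap.ker f) := by
        simp [Nat.card_eq_fintype_card, Fintype.card_subtype]
    _ = _ := by rw [Module.natCard_eq_pow_finrank (K := K), hrank, Nat.card_eq_fintype_card]

section Code

variable {ι F : Type*} [Field F] (C : Submodule F (ι → F))

/-- The map reading off the coordinates of a codeword in `U`, i.e. puncturing outside `U`. -/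
def puncture (U : Finset ι) : C →ₗ[F] (U → F) :=
  (LinearMap.funLeft F F Subtype.val).domRestrict C

theorem puncture_eq_restrict_iff {U : Finset ι} {c : C} {y : ι → F} :
    puncture C U c = U.restrict y ↔ ∀ i ∈ U, (c : ι → F) i = y i := by
  simp [puncture, funext_iff, LinearMap.funLeft_apply]

variable {C} [Fintype ι] [DecidableEq F] {d : ℕ}

theorem puncture_injective (hC : ∀ c ∈ C, c ≠ 0 → d ≤ hammingNorm c) {U : Finset ι}
    (hU : Fintype.card ι < #U + d) : Function.Injective (puncture C U) := by
  classical
  refine (injective_iff_map_eq_zero _).mpr fun c hc ↦ ?_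
  by_contra hne
  have hsupp : hammingSupport (c : ι → F) ⊆ Uᶜ :=
    hammingSupport_subset_iff.mpr <| by
      simpa using (puncture_eq_restrict_iff C (y := 0)).mp hc
  have := hC c c.2 (by simpa using hne)
  have := card_le_card hsupp
  rw [card_hammingSupport] at this
  have := card_add_card_compl U
  lia

-- Any `k` coordinates form an information set, and hence so does every smaller set of coordinates.
theorem puncture_surjective (hC : ∀ c ∈ C, c ≠ 0 → d ≤ hammingNorm c)
    (hMDS : d + Module.finrank F C = Fintype.card ι + 1) {U : Finset ι}
    (hU : #U ≤ Module.finrank F C) : Function.Surjective (puncture C U) := by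
  have hk : Module.finrank F C ≤ Fintype.card ι :=
    C.finrank_le.trans_eq (Module.finrank_fintype_fun_eq_card F)
  obtain ⟨U', hUU', hU'⟩ := exists_superset_card_eq hU hk
  have hinj : Function.Injective (puncture C U') :=
    puncture_injective hC (by lia)
  have hsurj : Function.Surjective (puncture C U') :=
    (LinearMap.injective_iff_surjective_of_finrank_eq_finrank (by simp [hU'])).mp hinj
  intro y
  obtain ⟨c, hc⟩ := hsurj (U'.restrict (Function.extend Subtype.val y 0))
  refine ⟨c, funext fun i ↦ ?_⟩
  exact ((puncture_eq_restrict_iff C).mp hc i (hUU' i.2)).trans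
    (Subtype.val_injective.extend_apply y 0 i)

variable [DecidableEq ι] [Fintype F] [DecidablePred (· ∈ C)]

theorem card_codewords_add_supported (hC : ∀ c ∈ C, c ≠ 0 → d ≤ hammingNorm c)
    (hMDS : d + Module.finrank F C = Fintype.card ι + 1) {S : Finset ι} (hS : d ≤ #S + 1)
    (e : ι → F) :
    #{c : C | hammingSupport ((c : ι → F) + e) ⊆ S} = Fintype.card F ^ (#S + 1 - d) := by
  have hSn : #S ≤ Fintype.card ι := card_le_univ S
  have hsurj : Function.Surjective (puncture C Sᶜ) :=
    puncture_surjective hC hMDS (by rw [card_compl]; lia)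
  have hfiber := card_fiber_eq_pow_of_surjective hsurj (Sᶜ.restrict (-e))
  rw [Module.finrank_fintype_fun_eq_card, Fintype.card_coe, card_compl] at hfiber
  simp_rw [puncture_eq_restrict_iff] at hfiber
  convert hfiber using 2
  · simp [hammingSupport_subset_iff, eq_neg_iff_add_eq_zero]
  · lia

theorem sum_card_supportedBall (hC : ∀ c ∈ C, c ≠ 0 → d ≤ hammingNorm c)
    (hMDS : d + Module.finrank F C = Fintype.card ι + 1) {S : Finset ι} (hS : d ≤ #S + 1)
    (t : ℕ) :
    (∑ c : C, #(supportedBall S (c : ι → F) t) : ℚ) =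
      (Fintype.card F : ℚ) ^ (#S + 1 - d) * sphereVol (Fintype.card F) (Fintype.card ι) t := by
  have hswap : ∑ c : C, #(supportedBall S (c : ι → F) t) =
      ∑ e ∈ supportedBall univ (0 : ι → F) t, #{c : C | hammingSupport ((c : ι → F) + e) ⊆ S} := by
    simp_rw [card_supportedBall_eq_card_filter_add S]
    exact sum_card_bipartiteAbove_eq_sum_card_bipartiteBelow _
  rw [← Nat.cast_sum, hswap, sum_congr rfl fun e _ ↦ card_codewords_add_supported hC hMDS hS e,
    sum_const, smul_eq_mul, Nat.cast_mul, card_supportedBall_zero, card_univ, mul_comm,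
    Nat.cast_pow]

theorem sum_ne_zero_card_supportedBall_of_le (hC : ∀ c ∈ C, c ≠ 0 → d ≤ hammingNorm c)
    (hMDS : d + Module.finrank F C = Fintype.card ι + 1) {S : Finset ι} (hS : d ≤ #S + 1)
    (t : ℕ) :
    (∑ c : C with c ≠ 0, #(supportedBall S (c : ι → F) t) : ℚ) =
      (Fintype.card F : ℚ) ^ (#S + 1 - d) * sphereVol (Fintype.card F) (Fintype.card ι) t -
        sphereVol (Fintype.card F) #S t := by
  rw [← sum_card_supportedBall hC hMDS hS, ← card_supportedBall_zero (M := F) S, filter_ne',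
    ← add_sum_erase _ _ (mem_univ (0 : C)), Submodule.coe_zero, add_sub_cancel_left]

theorem sum_ne_zero_card_supportedBall_of_lt (hC : ∀ c ∈ C, c ≠ 0 → d ≤ hammingNorm c)
    {S : Finset ι} {t : ℕ} (hS : #S + t < d) :
    ∑ c : C with c ≠ 0, #(supportedBall S (c : ι → F) t) = 0 := by
  refine sum_eq_zero fun c hc ↦ card_eq_zero.mpr <| supportedBall_eq_empty ?_
  have := hC c c.2 (by simpa using hc)
  have := le_card_sdiff S (hammingSupport (c : ι → F))
  rw [card_hammingSupport] at this
  lia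

theorem card_codewords_hammingSupport_sdiff_eq (hC : ∀ c ∈ C, c ≠ 0 → d ≤ hammingNorm c)
    (hMDS : d + Module.finrank F C = Fintype.card ι + 1) {S R : Finset ι}
    (hSR : Disjoint S R) (hcard : #S + #R = d) :
    #{c : C | c ≠ 0 ∧ hammingSupport (c : ι → F) \ S = R} = Fintype.card F - 1 := by
  have hunion : #(S ∪ R) = d := by rw [card_union_of_disjoint hSR, hcard]
  have hcount := card_codewords_add_supported hC hMDS (S := S ∪ R) (by lia) 0
  rw [hunion, Nat.add_sub_cancel_left, pow_one] at hcount
  rw [← hcount, ← card_erase_of_mem (a := (0 : C)) (by simp [hammingSupport_subset_iff])]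
  congr 1 with c
  simp only [mem_filter_univ, mem_erase, add_zero]
  refine and_congr_right fun hc ↦ ⟨?_, fun hsub ↦ ?_⟩
  · rintro rfl
    rw [union_sdiff_self_eq_union]
    exact subset_union_right
  · have hw := hC c c.2 (by simpa using hc)
    rw [eq_of_subset_of_card_le hsub (hunion.trans_le hw), union_sdiff_cancel_left hSR]

theorem sum_ne_zero_card_supportedBall_of_eq (hC : ∀ c ∈ C, c ≠ 0 → d ≤ hammingNorm c)
    (hMDS : d + Module.finrank F C = Fintype.card ι + 1) {S : Finset ι} {t : ℕ}
    (hS : #S + t = d) :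
    ∑ c : C with c ≠ 0, #(supportedBall S (c : ι → F) t) =
      (Fintype.card ι - #S).choose t * (Fintype.card F - 1) := by
  have hball : ∀ c : C, c ≠ 0 → #(supportedBall S (c : ι → F) t) =
      if #(hammingSupport (c : ι → F) \ S) = t then 1 else 0 := by
    intro c hc
    split_ifs with ht
    · rw [supportedBall_eq_singleton ht, card_singleton]
    · have hw := hC c c.2 (by simpa using hc)
      have hsdiff := le_card_sdiff S (hammingSupport (c : ι → F))
      rw [card_hammingSupport] at hsdiff
      rw [supportedBall_eq_empty (by lia), card_empty]
  have hmaps : ∀ c ∈ ({c : C | c ≠ 0 ∧ #(hammingSupport (c : ι → F) \ S) = t} : Finset C),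
      hammingSupport (c : ι → F) \ S ∈ powersetCard t Sᶜ := by
    intro c hc
    exact mem_powersetCard.mpr ⟨by simp [subset_iff], (mem_filter.mp hc).2.2⟩
  rw [sum_congr rfl fun c hc ↦ hball c (mem_filter.mp hc).2, ← card_filter, filter_filter,
    card_eq_sum_card_fiberwise hmaps]
  have hfiber : ∀ R ∈ powersetCard t Sᶜ,
      #{c ∈ ({c : C | c ≠ 0 ∧ #(hammingSupport (c : ι → F) \ S) = t} : Finset C) |
        hammingSupport c.1 \ S = R} = Fintype.card F - 1 := by
    intro R hR
    obtain ⟨hRS, rfl⟩ := mem_powersetCard.mp hR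
    rw [← card_codewords_hammingSupport_sdiff_eq hC hMDS
      (disjoint_right.mpr fun i hi ↦ mem_compl.mp (hRS hi)) hS, filter_filter]
    congr 1 with c
    simp only [mem_filter_univ]
    grind
  rw [sum_congr rfl hfiber, sum_const, card_powersetCard, card_compl, smul_eq_mul]

variable (C) in
/-- The vectors of `F^ι` at Hamming distance at most `t` from some nonzero codeword. -/
def nonzeroCodewordBalls (t : ℕ) : Finset (ι → F) :=
  {x | ∃ c : C, c ≠ 0 ∧ hammingDist x c ≤ t}

theorem card_nonzeroCodewordBalls_filter_supported (hC : ∀ c ∈ C, c ≠ 0 → d ≤ hammingNorm c)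
    {t : ℕ} (ht : 2 * t < d) (S : Finset ι) :
    #{x ∈ nonzeroCodewordBalls C t | hammingSupport x ⊆ S} =
      ∑ c : C with c ≠ 0, #(supportedBall S (c : ι → F) t) := by
  rw [← card_biUnion]
  · congr 1 with x
    simp only [nonzeroCodewordBalls, mem_filter, mem_univ, true_and, mem_biUnion,
      mem_supportedBall]
    tauto
  · intro c _ c' _ hne
    refine disjoint_left.mpr fun x hx hx' ↦ ?_
    have hdist := hC _ (-c + c').2 (by simpa [neg_add_eq_zero] using hne)
    rw [Submodule.coe_add, Submodule.coe_neg, ← hammingDist_eq_hammingNorm] at hdist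
    have := hammingDist_triangle_left (c : ι → F) c' x
    have := (mem_supportedBall.mp hx).2
    have := (mem_supportedBall.mp hx').2
    lia

end Code

section CosetWeight

variable {F : Type*} [Field F] [Fintype F] [DecidableEq F] {n : ℕ} (C : Submodule F (Fin n → F))

theorem cosetWeight_le_iff {x : Fin n → F} {t : ℕ} :
    cosetWeight C x ≤ t ↔ ∃ c ∈ C, hammingNorm (x - c) ≤ t := by
  have hne : {m : ℕ | ∃ c ∈ C, hammingNorm (x - c) = m}.Nonempty := ⟨_, 0, C.zero_mem, rfl⟩
  constructor
  · intro h
    obtain ⟨c, hc, hmin⟩ := Nat.sInf_mem hne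
    exact ⟨c, hc, hmin.trans_le h⟩
  · rintro ⟨c, hc, h⟩
    exact le_trans (csInf_le' ⟨c, hc, rfl⟩) h

theorem numVectorsCosetLe_eq_card_filter [DecidablePred (· ∈ C)] {t w : ℕ} (htw : t < w) :
    numVectorsCosetLe C w t = #{x ∈ nonzeroCodewordBalls C t | hammingNorm x = w} := by
  have hdist (x c : Fin n → F) : hammingDist x c = hammingNorm (x - c) := by
    rw [hammingDist_comm, hammingDist_eq_hammingNorm, neg_add_eq_sub]
  rw [numVectorsCosetLe, ← Set.ncard_coe_finset]
  congr 1 with x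
  simp only [cosetWeight_le_iff, nonzeroCodewordBalls, hdist, Set.mem_ofPred_eq, coe_filter,
    mem_filter_univ]
  rw [and_comm]
  refine and_congr_left fun hw ↦ ⟨?_, fun ⟨c, _, h⟩ ↦ ⟨c, c.2, h⟩⟩
  rintro ⟨c, hc, h⟩
  refine ⟨⟨c, hc⟩, ?_, h⟩
  rintro ⟨⟩
  rw [sub_zero] at h
  lia

end CosetWeight

section RadiusTwo

theorem sphereVol_two_sub (q n m : ℕ) :
    sphereVol q n 2 - sphereVol q m 2 =
      ((n : ℚ) - m) * (q - 1) / 2 * (2 + (q - 1) * (n + m - 1)) := by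
  simp only [sphereVol, sum_range_succ, sum_range_zero, Nat.choose_zero_right,
    Nat.choose_one_right, Nat.cast_choose_two]
  push_cast
  ring

/-- The number of vectors supported on a fixed set of `m` coordinates and lying at distance at most
`2` from a nonzero codeword of an `[n, n + 1 - d, d]_q` MDS code with `5 ≤ d`. -/
def numSupportedNear (q n d m : ℕ) : ℚ :=
  if d ≤ m + 1 then (q : ℚ) ^ (m + 1 - d) * sphereVol q n 2 - sphereVol q m 2
  else if m + 2 = d then ((n - m).choose 2 : ℚ) * (q - 1)
  else 0

theorem card_filter_supported_eq_numSupportedNear {ι F : Type*} [Fintype ι] [DecidableEq ι]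
    [Field F] [Fintype F] [DecidableEq F] {C : Submodule F (ι → F)} [DecidablePred (· ∈ C)] {d : ℕ}
    (hC : ∀ c ∈ C, c ≠ 0 → d ≤ hammingNorm c)
    (hMDS : d + Module.finrank F C = Fintype.card ι + 1) (hd : 5 ≤ d) (S : Finset ι) :
    (#{x ∈ nonzeroCodewordBalls C 2 | hammingSupport x ⊆ S} : ℚ) =
      numSupportedNear (Fintype.card F) (Fintype.card ι) d #S := by
  rw [card_nonzeroCodewordBalls_filter_supported hC (by lia), numSupportedNear]
  split_ifs with hS hS
  · rw [Nat.cast_sum, sum_ne_zero_card_supportedBall_of_le hC hMDS hS]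
  · rw [sum_ne_zero_card_supportedBall_of_eq hC hMDS hS, Nat.cast_mul,
      Nat.cast_pred Fintype.card_pos]
  · rw [sum_ne_zero_card_supportedBall_of_lt hC (by lia), Nat.cast_zero]

theorem sum_neg_one_pow_mul_choose_mul_ite {R : Type*} [CommRing R] (w r : ℕ) (a : R) :
    ∑ j ∈ range (w + 1), (-1) ^ j * (w.choose j : R) * (if w - j = r then a else 0) =
      (-1) ^ (w + r) * (w.choose r : R) * a := by
  obtain hr | hr := le_or_gt r w
  · rw [sum_eq_single (w - r), if_pos (Nat.sub_sub_self hr), Nat.choose_symm hr]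
    · obtain ⟨k, rfl⟩ := Nat.exists_eq_add_of_le' hr
      rw [Nat.add_sub_cancel, add_assoc, ← two_mul, pow_add, pow_mul, neg_one_sq, one_pow, mul_one]
    · intro j hj hne
      rw [if_neg (by grind), mul_zero]
    · grind
  · rw [Nat.choose_eq_zero_of_lt hr, Nat.cast_zero, mul_zero, zero_mul]
    exact sum_eq_zero fun j _ ↦ by rw [if_neg (by lia), mul_zero]

theorem sum_neg_one_pow_mul_choose_mul_ite_le {R : Type*} [CommRing R] {d : ℕ} (hd : 0 < d)
    (w : ℕ) (f : ℕ → R) :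
    ∑ j ∈ range (w + 1), (-1) ^ j * (w.choose j : R) * (if d ≤ w - j then f (w - j) else 0) =
      ∑ j ∈ range (w + 1 - d), (-1) ^ j * (w.choose j : R) * f (w - j) := by
  simp_rw [mul_ite, mul_zero, ← sum_filter]
  congr 1 with j
  grind

theorem numSupportedNear_eq {q n d m : ℕ} (hd : 2 ≤ d) (hdn : d ≤ n + 1) :
    numSupportedNear q n d m =
      (if d ≤ m then (q : ℚ) ^ (m + 1 - d) * sphereVol q n 2 - sphereVol q m 2 else 0) +
      (if m = d - 1 then ((n : ℚ) - d + 1) * (q - 1) / 2 * (2 + (q - 1) * (n + d - 2)) else 0) +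
      (if m = d - 2 then ((n : ℚ) - d + 1) * (q - 1) / 2 * (n - d + 2) else 0) := by
  obtain hm | rfl | rfl | hm : d ≤ m ∨ d = m + 1 ∨ d = m + 2 ∨ m + 2 < d := by lia
  · rw [numSupportedNear, if_pos (by lia), if_pos hm, if_neg (by lia), if_neg (by lia)]
    ring
  · rw [numSupportedNear, if_pos le_rfl, if_neg (by lia), if_pos (by lia), if_neg (by lia),
      Nat.sub_self, pow_zero, one_mul, sphereVol_two_sub]
    push_cast
    ring
  · rw [numSupportedNear, if_neg (by lia), if_pos rfl, if_neg (by lia), if_neg (by lia),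
      if_pos (by lia), Nat.cast_choose_two, Nat.cast_sub (by lia)]
    push_cast
    ring
  · rw [numSupportedNear, if_neg (by lia), if_neg (by lia), if_neg (by lia), if_neg (by lia),
      if_neg (by lia)]
    ring

theorem sum_neg_one_pow_mul_choose_mul_numSupportedNear {q n d : ℕ} (hd : 2 ≤ d)
    (hdn : d ≤ n + 1) (w : ℕ) :
    ∑ j ∈ range (w + 1), (-1) ^ j * (w.choose j : ℚ) * numSupportedNear q n d (w - j) =
      (∑ j ∈ range (w + 1 - d), (-1 : ℚ) ^ j * (w.choose j : ℚ) *
          ((q : ℚ) ^ (w - d + 1 - j) * sphereVol q n 2 - sphereVol q (w - j) 2))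
        - (-1 : ℚ) ^ (w + d) * (((n : ℚ) - (d : ℚ) + 1) * ((q : ℚ) - 1) / 2) *
            ((w.choose (d - 1) : ℚ) * (2 + ((q : ℚ) - 1) * ((n : ℚ) + (d : ℚ) - 2))
              - (w.choose (d - 2) : ℚ) * ((n : ℚ) - (d : ℚ) + 2)) := by
  have hexp : ∀ j ∈ range (w + 1 - d), w - j + 1 - d = w - d + 1 - j := by grind
  have hsign1 : (-1 : ℚ) ^ (w + (d - 1)) = -(-1) ^ (w + d) := by
    obtain ⟨m, rfl⟩ := Nat.exists_eq_add_of_le' hd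
    rw [Nat.add_succ_sub_one]
    ring
  have hsign2 : (-1 : ℚ) ^ (w + (d - 2)) = (-1) ^ (w + d) := by
    obtain ⟨m, rfl⟩ := Nat.exists_eq_add_of_le' hd
    rw [Nat.add_sub_cancel]
    ring
  simp_rw [numSupportedNear_eq hd hdn, mul_add, sum_add_distrib]
  rw [sum_neg_one_pow_mul_choose_mul_ite_le (by lia) w fun m ↦
      (q : ℚ) ^ (m + 1 - d) * sphereVol q n 2 - sphereVol q m 2,
    sum_neg_one_pow_mul_choose_mul_ite, sum_neg_one_pow_mul_choose_mul_ite, hsign1, hsign2,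
    sum_congr rfl fun j hj ↦ by rw [hexp j hj]]
  ring

end RadiusTwo

theorem numVectorsCosetLe_two_eq_general {F : Type*} [Field F] [Fintype F] [DecidableEq F]
    (q n d w : ℕ) (hq : Fintype.card F = q) (C : Submodule F (Fin n → F))
    (hC : ∀ c ∈ C, c ≠ 0 → d ≤ hammingNorm c) (hMDS : d + Module.finrank F C = n + 1)
    (hd : 5 ≤ d) (hw : 2 < w) :
    (numVectorsCosetLe C w 2 : ℚ) =
      (n.choose w : ℚ) *
        ((∑ j ∈ Finset.range (w + 1 - d), (-1 : ℚ) ^ j * (w.choose j : ℚ) *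
            ((q : ℚ) ^ (w - d + 1 - j) * sphereVol q n 2 - sphereVol q (w - j) 2))
          - (-1 : ℚ) ^ (w + d) * (((n : ℚ) - (d : ℚ) + 1) * ((q : ℚ) - 1) / 2) *
              ((w.choose (d - 1) : ℚ) * (2 + ((q : ℚ) - 1) * ((n : ℚ) + (d : ℚ) - 2))
                - (w.choose (d - 2) : ℚ) * ((n : ℚ) - (d : ℚ) + 2))) := by
  classical
  subst hq
  rw [← sum_neg_one_pow_mul_choose_mul_numSupportedNear (by lia) (by lia),
    numVectorsCosetLe_eq_card_filter C hw]
  simpa only [Fintype.card_fin] using card_filter_hammingNorm_eq_of_supported_count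
    (nonzeroCodewordBalls C 2) (numSupportedNear (Fintype.card F) (Fintype.card (Fin n)) d)
    (card_filter_supported_eq_numSupportedNear hC (by rwa [Fintype.card_fin]) hd) w

/-- **Integral weight spectrum of cosets of weight ≤ 2 of an MDS code** (Lemma 5.1,
eq. (5.1)).  For an `[n,k,d]_q` MDS code with `d ≥ 5` and `d-2 ≤ w ≤ n`, as rationals,
`A_w^Σ(V^{≤2}) = C(n,w)[ ∑_{j=0}^{w-d} (-1)^j C(w,j)( q^{w-d+1-j} V_n(2) - V_{w-j}(2) )
  - (-1)^{w-d} ((n-d+1)(q-1)/2)( C(w,d-1)(2+(q-1)(n+d-2)) - C(w,d-2)(n-d+2) ) ]`. -/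
theorem numVectorsCosetLe_two_eq {F : Type*} [Field F] [Fintype F] [DecidableEq F]
    (q n k d w : ℕ) (hq : Fintype.card F = q)
    (C : Submodule F (Fin n → F))
    (hk : Module.finrank F C = k) (hmin : HasMinDist C d) (hMDS : d + k = n + 1)
    (hd : 5 ≤ d) (hw1 : d - 2 ≤ w) (hwn : w ≤ n) :
    (numVectorsCosetLe C w 2 : ℚ) =
      (n.choose w : ℚ) *
        ((∑ j ∈ Finset.range (w + 1 - d), (-1 : ℚ) ^ j * (w.choose j : ℚ) *
            ((q : ℚ) ^ (w - d + 1 - j) * sphereVol q n 2 - sphereVol q (w - j) 2))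
          - (-1 : ℚ) ^ (w + d) * (((n : ℚ) - (d : ℚ) + 1) * ((q : ℚ) - 1) / 2) *
              ((w.choose (d - 1) : ℚ) * (2 + ((q : ℚ) - 1) * ((n : ℚ) + (d : ℚ) - 2))
                - (w.choose (d - 2) : ℚ) * ((n : ℚ) - (d : ℚ) + 2))) := by
  exact numVectorsCosetLe_two_eq_general q n d w hq C hmin.1 (hk ▸ hMDS) hd (by lia)
end

section
/- Let C be an [n, k, d]_q MDS code with minimum distance d ≥ 5, and let w be a natural number with d - 2 ≤ w ≤ n. Then the overall number A_w^Σ(V^{(2)}) of Hamming-weight-w vectors lying in cosets of C of weight exactly 2 satisfies A_w^Σ(V^{(2)}) = C(n,2) (q-1)^2 · [ A_w(C) - ε · ( C(n,w) C(w-1, d-2) - C(n-2, w-2) C(w-3, d-4) ) ] + ε · C(n,2) (q-1) · C(n-d+2, n-w) · C(n-2, d-2), as an identity of integers. -/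
open Finset

/-!
The coordinates vanishing outside a set `S` impose independent conditions on an MDS code, so it has
`q ^ (#S + 1 - d)` codewords supported inside `S`. By Möbius inversion the number of codewords with
support exactly `S` is `G #S`, where `G j` is the `j`-th finite difference of `s ↦ q ^ (s + 1 - d)`
at `0`; it satisfies `G (w + 1) = (q - 1) (G w - (-1) ^ (w + d) C(w - 1, d - 2))`.

When `2 W < d`, a vector of a coset of weight `W` has a unique codeword `c` at distance `W`. Fix the
supports `S` of `x` and `T` of `x - c`. Then `c` is nonzero on the symmetric difference of `S` and
`T`, and on some subset of `S ∩ T`, and each choice of `c` leaves a product of independent choices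
for the entries of `x`. This gives a sum of values of `G` depending only on `#(S ∩ T)`. For `W = 2`
the recurrence reduces all of them to `G w` up to binomial corrections, which are then summed by
Vandermonde's identity.
-/

section FwdDiff

theorem eq_fwdDiff_iter_of_sum_powerset {ι G : Type*} [AddCommGroup G]
    {g : Finset ι → G} {f : ℕ → G} (h : ∀ S, ∑ T ∈ S.powerset, g T = f #S) (S : Finset ι) :
    g S = (fwdDiff 1)^[#S] f 0 := by
  classical
  induction S using Finset.strongInduction with
  | H S ih =>
    have hf : ∑ T ∈ S.powerset, (fwdDiff 1)^[#T] f 0 = f #S := by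
      rw [sum_powerset_apply_card fun j ↦ (fwdDiff 1)^[j] f 0]
      simpa using (shift_eq_sum_fwdDiff_iter 1 f #S 0).symm
    have hsum := (h S).trans hf.symm
    rw [← sum_erase_add _ _ (mem_powerset_self S),
      ← sum_erase_add _ (fun T ↦ (fwdDiff 1)^[#T] f 0) (mem_powerset_self S)] at hsum
    have hproper : ∀ T ∈ S.powerset.erase S, g T = (fwdDiff 1)^[#T] f 0 := by
      intro T hT
      rw [mem_erase, mem_powerset] at hT
      exact ih T (hT.2.ssubset_of_ne hT.1)
    rw [sum_congr rfl hproper] at hsum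
    exact add_left_cancel hsum

theorem fwdDiff_iter_single_zero (v m : ℕ) :
    (fwdDiff 1)^[v] (Pi.single m 1 : ℕ → ℤ) 0 = (-1) ^ (v + m) * v.choose m := by
  have hcoeff : ((-1 : ℤ) ^ (v - m) * v.choose m) = (-1) ^ (v + m) * v.choose m := by
    rcases le_or_gt m v with h | h
    · obtain ⟨t, rfl⟩ := Nat.exists_eq_add_of_le h
      rw [Nat.add_sub_cancel_left, add_right_comm, pow_add, Even.neg_one_pow ⟨m, rfl⟩, one_mul]
    · simp [Nat.choose_eq_zero_of_lt h]
  rw [fwdDiff_iter_eq_sum_shift, ← hcoeff]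
  simp +contextual [Pi.single_apply, Nat.choose_eq_zero_iff]

/-- The number of codewords with a prescribed support of size `w` in an MDS code of minimum
distance `d` over a field of size `q`. It is a finite difference at `0` because
`s ↦ q ^ (s + 1 - d)`, with truncated subtraction, counts the codewords supported inside a set of
size `s`. -/
def mdsSupportCount (q : ℤ) (d w : ℕ) : ℤ :=
  (fwdDiff 1)^[w] (fun s ↦ q ^ (s + 1 - d)) 0

theorem mdsSupportCount_succ (q : ℤ) {d w : ℕ} (hd : 2 ≤ d) (hw : 1 ≤ w) :
    mdsSupportCount q d (w + 1) =
      (q - 1) * (mdsSupportCount q d w - (-1) ^ (w + d) * (w - 1).choose (d - 2)) := by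
  obtain ⟨v, rfl⟩ := Nat.exists_eq_add_of_le' hw
  obtain ⟨m, rfl⟩ := Nat.exists_eq_add_of_le' hd
  set B : ℕ → ℤ := fun s ↦ q ^ (s + 1 - (m + 2)) with hB
  set χ : ℕ → ℤ := fun s ↦ if s ≤ m then -1 else 0 with hχ
  -- `B` is constant up to `m + 1` and geometric from there on.
  have hB_diff : fwdDiff 1 B = (q - 1) • (B + χ) := by
    ext s
    simp only [fwdDiff, hB, hχ, Pi.add_apply, Pi.smul_apply, smul_eq_mul]
    split_ifs with hs
    · rw [show s + 1 + 1 - (m + 2) = 0 by lia, show s + 1 - (m + 2) = 0 by lia]; ring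
    · rw [show s + 1 + 1 - (m + 2) = s + 1 - (m + 2) + 1 by lia]; ring
  have hχ_diff : fwdDiff 1 χ = Pi.single m 1 := by
    ext s
    simp only [fwdDiff, hχ, Pi.single_apply]
    grind
  have hsign : (-1 : ℤ) ^ (v + 1 + (m + 2)) = -(-1) ^ (v + m) := by ring
  rw [mdsSupportCount, Function.iterate_succ_apply, hB_diff, fwdDiff_iter_const_smul,
    fwdDiff_iter_add, Function.iterate_succ_apply (fwdDiff 1) v χ, hχ_diff, mdsSupportCount]
  simp only [Pi.smul_apply, Pi.add_apply, smul_eq_mul, fwdDiff_iter_single_zero, hsign,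
    Nat.add_sub_cancel]
  ring

end FwdDiff

section Binomial

theorem sum_antidiagonal_choose_mul_choose_mul_choose {a b w : ℕ} (r : ℕ) (hw : w ≤ a + b) :
    ∑ ij ∈ antidiagonal w, a.choose ij.1 * b.choose ij.2 * ij.2.choose r =
      b.choose r * (a + b - r).choose (a + b - w) := by
  have hterm (i j : ℕ) (hj : r ≤ j) :
      a.choose i * b.choose j * j.choose r =
        b.choose r * (a.choose i * (b - r).choose (j - r)) := by
    rw [mul_assoc, Nat.choose_mul hj]; ring
  rcases lt_or_ge b r with hb | hb
  · rw [Nat.choose_eq_zero_of_lt hb, zero_mul]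
    refine sum_eq_zero fun ij _ ↦ ?_
    rcases lt_or_ge ij.2 r with hj | hj
    · rw [Nat.choose_eq_zero_of_lt hj, mul_zero]
    · rw [Nat.choose_eq_zero_of_lt (hb.trans_le hj), mul_zero, zero_mul]
  rcases lt_or_ge w r with h | h
  · rw [Nat.choose_eq_zero_of_lt (show a + b - r < a + b - w by lia), mul_zero]
    refine sum_eq_zero fun ij hij ↦ ?_
    rw [HasAntidiagonal.mem_antidiagonal] at hij
    rw [Nat.choose_eq_zero_of_lt (show ij.2 < r by lia), mul_zero]
  calc ∑ ij ∈ antidiagonal w, a.choose ij.1 * b.choose ij.2 * ij.2.choose r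
    _ = ∑ ij ∈ antidiagonal w with r ≤ ij.2, a.choose ij.1 * b.choose ij.2 * ij.2.choose r := by
      refine (sum_filter_of_ne fun ij _ hne ↦ ?_).symm
      exact le_of_not_gt fun hlt ↦ hne (by rw [Nat.choose_eq_zero_of_lt hlt, mul_zero])
    _ = ∑ ij ∈ antidiagonal (w - r), b.choose r * (a.choose ij.1 * (b - r).choose ij.2) := by
      rw [Finset.Nat.antidiagonal_filter_le_snd_of_le h, sum_map]
      refine sum_congr rfl fun ij _ ↦ ?_
      simpa using hterm ij.1 (ij.2 + r) (Nat.le_add_left _ _)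
    _ = b.choose r * (a + b - r).choose (a + b - w) := by
      rw [← mul_sum, ← Nat.add_choose_eq, ← Nat.add_sub_assoc hb,
        ← Nat.choose_symm (show a + b - w ≤ a + b - r by lia)]
      congr 2
      lia

end Binomial

theorem sum_powersetCard_univ_inter_sdiff {ι M : Type*} [Fintype ι] [DecidableEq ι]
    [AddCommMonoid M] (T : Finset ι) (w : ℕ) (f : ℕ → ℕ → M) :
    ∑ S ∈ powersetCard w univ, f #(S ∩ T) #(S \ T) =
      ∑ ij ∈ antidiagonal w,
        ((#T).choose ij.1 * (Fintype.card ι - #T).choose ij.2) • f ij.1 ij.2 := by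
  have hmaps : ∀ S ∈ powersetCard w univ, (#(S ∩ T), #(S \ T)) ∈ antidiagonal w := by
    intro S hS
    rw [HasAntidiagonal.mem_antidiagonal, card_inter_add_card_sdiff, (mem_powersetCard.1 hS).2]
  rw [← sum_fiberwise_of_maps_to hmaps]
  refine sum_congr rfl fun ij hij ↦ ?_
  have hfiber : #{S ∈ powersetCard w univ | (#(S ∩ T), #(S \ T)) = ij} =
      #(powersetCard ij.1 T ×ˢ powersetCard ij.2 Tᶜ) := by
    rw [HasAntidiagonal.mem_antidiagonal] at hij
    refine card_nbij' (fun S ↦ (S ∩ T, S \ T)) (fun P ↦ P.1 ∪ P.2) ?_ ?_ ?_ ?_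
    · intro S hS
      simp only [mem_coe, mem_filter, Prod.ext_iff] at hS
      simp only [mem_coe, mem_product, mem_powersetCard, hS.2, inter_subset_right, and_true,
        true_and]
      grind [mem_compl]
    · rintro ⟨P, Q⟩ hPQ
      simp only [mem_coe, mem_product, mem_powersetCard] at hPQ
      have hinter : (P ∪ Q) ∩ T = P := by grind [mem_compl]
      have hsdiff : (P ∪ Q) \ T = Q := by grind [mem_compl]
      have hcard := card_inter_add_card_sdiff (P ∪ Q) T
      grind
    · intro S _
      exact sup_inf_sdiff S T
    · rintro ⟨P, Q⟩ hPQ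
      simp only [mem_coe, mem_product, mem_powersetCard] at hPQ
      ext1 <;> grind [mem_compl]
  rw [← card_compl, ← card_powersetCard, ← card_powersetCard, ← card_product, ← hfiber]
  refine sum_eq_card_nsmul fun S hS ↦ ?_
  rw [← (mem_filter.1 hS).2]

section Support

variable {ι M : Type*} [Fintype ι] [DecidableEq M]

/-- The support of a vector as a `Finset`, so that its cardinality is the Hamming weight. -/
def vecSupport [Zero M] (x : ι → M) : Finset ι := {i | x i ≠ 0}

theorem mem_vecSupport [Zero M] {x : ι → M} {i : ι} : i ∈ vecSupport x ↔ x i ≠ 0 := by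
  simp [vecSupport]

theorem card_vecSupport [Zero M] (x : ι → M) : #(vecSupport x) = hammingNorm x := rfl

variable [DecidableEq ι] [AddGroup M]

theorem vecSupport_eq_symmDiff_union (x y : ι → M) :
    vecSupport y = symmDiff (vecSupport x) (vecSupport (x - y)) ∪
      vecSupport y ∩ (vecSupport x ∩ vecSupport (x - y)) := by
  ext i
  simp only [mem_union, mem_symmDiff, mem_inter, mem_vecSupport, Pi.sub_apply, ne_eq, sub_eq_zero]
  by_cases hx : x i = 0 <;> grind

variable [Fintype M]

theorem card_filter_vecSupport_eq_and_vecSupport_sub_eq {S T V : Finset ι} (hV : V ⊆ S ∩ T)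
    {y : ι → M} (hy : vecSupport y = symmDiff S T ∪ V) :
    #{x | vecSupport x = S ∧ vecSupport (x - y) = T} =
      (Fintype.card M - 1) ^ (#(S ∩ T) - #V) * (Fintype.card M - 2) ^ #V := by
  let coord (i : ι) : Finset M := {a | (a ≠ 0 ↔ i ∈ S) ∧ (a ≠ y i ↔ i ∈ T)}
  have hpi : ({x | vecSupport x = S ∧ vecSupport (x - y) = T} : Finset (ι → M)) =
      Fintype.piFinset coord := by
    ext x
    simp only [mem_filter_univ, Fintype.mem_piFinset, coord, Finset.ext_iff, mem_vecSupport,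
      Pi.sub_apply, sub_ne_zero, ← forall_and]
  have hcoord (i : ι) : #(coord i) = if i ∈ S ∩ T then
      if i ∈ V then Fintype.card M - 2 else Fintype.card M - 1 else 1 := by
    have hmem : i ∈ vecSupport y ↔ i ∈ symmDiff S T ∪ V := by rw [hy]
    simp only [mem_vecSupport, mem_union, mem_symmDiff] at hmem
    split_ifs with hST hiV
    · have : coord i = {0, y i}ᶜ := by grind [mem_compl]
      rw [this, card_compl, card_pair (by grind)]
    · have : coord i = {0}ᶜ := by grind [mem_compl]
      rw [this, card_compl, card_singleton]
    · have : coord i = {if i ∈ S then y i else 0} := by grind [mem_compl]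
      rw [this, card_singleton]
  simp only [hpi, Fintype.card_piFinset, hcoord]
  rw [prod_ite_mem, univ_inter, prod_ite, prod_const, prod_const, filter_mem_eq_inter,
    inter_eq_right.2 hV, filter_notMem_eq_sdiff, card_sdiff_of_subset hV, mul_comm]

theorem sum_card_filter_vecSupport_eq_and_vecSupport_sub_eq (A : Finset (ι → M)) (S T : Finset ι) :
    ∑ y ∈ A, #{x | vecSupport x = S ∧ vecSupport (x - y) = T} =
      ∑ V ∈ (S ∩ T).powerset, #{y ∈ A | vecSupport y = symmDiff S T ∪ V} *
        ((Fintype.card M - 1) ^ (#(S ∩ T) - #V) * (Fintype.card M - 2) ^ #V) := by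
  have hmaps : ∀ y ∈ A, vecSupport y ∩ (S ∩ T) ∈ (S ∩ T).powerset := fun y _ ↦
    mem_powerset.2 inter_subset_right
  rw [← sum_fiberwise_of_maps_to hmaps]
  refine sum_congr rfl fun V hV ↦ ?_
  rw [mem_powerset] at hV
  have hsub : {y ∈ A | vecSupport y = symmDiff S T ∪ V} ⊆ {y ∈ A | vecSupport y ∩ (S ∩ T) = V} := by
    refine monotone_filter_right A fun y _ hy ↦ ?_
    have hdisj : Disjoint (symmDiff S T) (S ∩ T) := disjoint_symmDiff_inf S T
    rw [hy, union_inter_distrib_right, inter_eq_left.2 hV,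
      disjoint_iff_inter_eq_empty.1 hdisj, empty_union]
  rw [← sum_subset hsub, sum_const_nat]
  · exact fun y hy ↦ card_filter_vecSupport_eq_and_vecSupport_sub_eq hV (mem_filter.1 hy).2
  · intro y hyV hy
    rw [card_eq_zero, filter_eq_empty_iff]
    rintro x - ⟨rfl, rfl⟩
    refine hy (mem_filter.2 ⟨(mem_filter.1 hyV).1, ?_⟩)
    rw [← (mem_filter.1 hyV).2]
    exact vecSupport_eq_symmDiff_union x y

end Support

section Codewords

variable {ι F : Type*} [Field F]

/-- The space of vectors supported inside `S`; its intersection with a code `C` is, up to the zero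
coordinates outside `S`, the shortening of `C` to `S`. -/
def coordSubspace (F : Type*) [Field F] {ι : Type*} (S : Finset ι) : Submodule F (ι → F) :=
  ⨅ i ∈ (S : Set ι)ᶜ, LinearMap.ker (LinearMap.proj i)

theorem finrank_coordSubspace (S : Finset ι) : Module.finrank F (coordSubspace F S) = #S := by
  classical
  rw [coordSubspace, (LinearMap.iInfKerProjEquiv F (fun _ ↦ F) disjoint_compl_right
    (Set.union_compl_self (S : Set ι)).ge).finrank_eq, Module.finrank_fintype_fun_eq_card]
  exact Fintype.card_coe S

variable [Fintype ι] [DecidableEq F]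

theorem mem_coordSubspace {S : Finset ι} {x : ι → F} :
    x ∈ coordSubspace F S ↔ vecSupport x ⊆ S := by
  simp only [coordSubspace, Submodule.mem_iInf, Set.mem_compl_iff, mem_coe, LinearMap.mem_ker,
    LinearMap.proj_apply, subset_iff, mem_vecSupport]
  exact forall_congr' fun _ ↦ not_imp_comm

variable {C : Submodule F (ι → F)} {d : ℕ}

theorem eq_of_hammingNorm_sub_add_hammingNorm_sub_lt
    (hmin : ∀ c ∈ C, c ≠ 0 → d ≤ hammingNorm c) {c c' x : ι → F} (hc : c ∈ C) (hc' : c' ∈ C)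
    (h : hammingNorm (x - c) + hammingNorm (x - c') < d) : c = c' := by
  by_contra hne
  have hle := hmin (c' - c) (C.sub_mem hc' hc) (sub_ne_zero.2 (Ne.symm hne))
  have htri := hammingDist_triangle_right c c' x
  simp only [hammingDist_eq_hammingNorm, neg_add_eq_sub] at htri
  lia

theorem finrank_inf_coordSubspace_le (hmin : ∀ c ∈ C, c ≠ 0 → d ≤ hammingNorm c) (S : Finset ι) :
    Module.finrank F (C ⊓ coordSubspace F S : Submodule F (ι → F)) ≤ #S + 1 - d := by
  classical
  obtain ⟨T, hTS, hT⟩ := exists_subset_card_eq (min_le_right (d - 1) #S)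
  have hdisj : Disjoint (C ⊓ coordSubspace F S) (coordSubspace F (T ∪ Sᶜ)) := by
    rw [Submodule.disjoint_def]
    rintro c ⟨hc, hcS⟩ hcT
    by_contra hne
    have hsupp : vecSupport c ⊆ T := by
      have hcS := mem_coordSubspace.1 hcS
      have hcT := mem_coordSubspace.1 hcT
      grind [mem_compl]
    have hle := card_le_card hsupp
    have hpos := hammingNorm_pos_iff.2 hne
    have := hmin c hc hne
    rw [card_vecSupport] at hle
    lia
  have hsum := Submodule.finrank_add_finrank_le_of_disjoint hdisj
  rw [finrank_coordSubspace, Module.finrank_fintype_fun_eq_card,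
    card_union_of_disjoint (disjoint_compl_right.mono_left hTS), card_compl] at hsum
  have := card_le_univ S
  lia

theorem finrank_inf_coordSubspace (hmin : ∀ c ∈ C, c ≠ 0 → d ≤ hammingNorm c)
    (hMDS : d + Module.finrank F C = Fintype.card ι + 1) (S : Finset ι) :
    Module.finrank F (C ⊓ coordSubspace F S : Submodule F (ι → F)) = #S + 1 - d := by
  refine (finrank_inf_coordSubspace_le hmin S).antisymm ?_
  have hadd := Submodule.finrank_sup_add_finrank_inf_eq C (coordSubspace F S)
  have hsup := Submodule.finrank_le (C ⊔ coordSubspace F S)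
  rw [finrank_coordSubspace] at hadd
  rw [Module.finrank_fintype_fun_eq_card] at hsup
  lia

variable [Fintype F]

open Classical in
/-- The codewords of `C` with support exactly `S`. -/
noncomputable def codewordsWithSupport (C : Submodule F (ι → F)) (S : Finset ι) :
    Finset (ι → F) :=
  {c | c ∈ C ∧ vecSupport c = S}

theorem mem_codewordsWithSupport {S : Finset ι} {c : ι → F} :
    c ∈ codewordsWithSupport C S ↔ c ∈ C ∧ vecSupport c = S := by
  simp [codewordsWithSupport]

theorem sum_powerset_card_codewordsWithSupport (S : Finset ι) :
    ∑ T ∈ S.powerset, #(codewordsWithSupport C T) =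
      Fintype.card F ^ Module.finrank F (C ⊓ coordSubspace F S : Submodule F (ι → F)) := by
  classical
  have hcard : Fintype.card F ^ Module.finrank F (C ⊓ coordSubspace F S : Submodule F (ι → F)) =
      #{c | c ∈ C ⊓ coordSubspace F S} := by
    rw [← Module.card_eq_pow_finrank, Fintype.card_subtype]
  rw [hcard, card_eq_sum_card_fiberwise (f := vecSupport) (t := S.powerset)]
  · refine sum_congr rfl fun T hT ↦ congr_arg card ?_
    ext c
    simp only [mem_codewordsWithSupport, mem_filter, mem_univ, true_and, Submodule.mem_inf,
      mem_coordSubspace]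
    rw [mem_powerset] at hT
    grind
  · intro c hc
    simpa [mem_coordSubspace] using ((mem_filter_univ c).1 hc).2

theorem card_codewordsWithSupport (hmin : ∀ c ∈ C, c ≠ 0 → d ≤ hammingNorm c)
    (hMDS : d + Module.finrank F C = Fintype.card ι + 1) (S : Finset ι) :
    (#(codewordsWithSupport C S) : ℤ) = mdsSupportCount (Fintype.card F) d #S := by
  refine eq_fwdDiff_iter_of_sum_powerset (g := fun S ↦ (#(codewordsWithSupport C S) : ℤ))
    (f := fun s ↦ (Fintype.card F : ℤ) ^ (s + 1 - d)) (fun T ↦ ?_) S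
  rw [← finrank_inf_coordSubspace hmin hMDS]
  exact_mod_cast sum_powerset_card_codewordsWithSupport T

/-- The number of pairs `(x, c)` with `c` a codeword, `x` of given support `S` and `x - c` of given
support `T`, for an MDS code of minimum distance `d` over a field of size `q`, where `t = #(S ∩ T)`
and `j` is the size of the symmetric difference of `S` and `T`. The index `v` is the number of
elements of `S ∩ T` at which `c` does not vanish. -/
def mdsPairCount (q : ℤ) (d t j : ℕ) : ℤ :=
  ∑ v ∈ range (t + 1), t.choose v * ((q - 1) ^ (t - v) * (q - 2) ^ v * mdsSupportCount q d (j + v))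

open Classical in
theorem sum_card_filter_eq_mdsPairCount [DecidableEq ι]
    (hmin : ∀ c ∈ C, c ≠ 0 → d ≤ hammingNorm c)
    (hMDS : d + Module.finrank F C = Fintype.card ι + 1) (S T : Finset ι) :
    (∑ c with c ∈ C, #{x : ι → F | vecSupport x = S ∧ vecSupport (x - c) = T} : ℤ) =
      mdsPairCount (Fintype.card F) d #(S ∩ T) #(symmDiff S T) := by
  have hq : 2 ≤ Fintype.card F := Fintype.one_lt_card
  have hcount (V : Finset ι) (hV : V ∈ (S ∩ T).powerset) :
      (#{c ∈ ({c | c ∈ C} : Finset (ι → F)) | vecSupport c = symmDiff S T ∪ V} : ℤ) =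
        mdsSupportCount (Fintype.card F) d (#(symmDiff S T) + #V) := by
    have hdisj : Disjoint (symmDiff S T) V :=
      Disjoint.mono_right (mem_powerset.1 hV) (disjoint_symmDiff_inf S T)
    rw [filter_filter, ← card_union_of_disjoint hdisj,
      ← card_codewordsWithSupport hmin hMDS]
    congr 2 with c
    simp [mem_codewordsWithSupport]
  rw [mdsPairCount, ← Nat.cast_sum, sum_card_filter_vecSupport_eq_and_vecSupport_sub_eq]
  push_cast [Nat.cast_sub hq, Nat.cast_sub (Nat.one_le_of_lt hq)]
  rw [sum_congr rfl fun V hV ↦ by rw [hcount V hV, mul_comm]]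
  simpa only [nsmul_eq_mul] using sum_powerset_apply_card (x := S ∩ T) (fun v ↦
    ((Fintype.card F : ℤ) - 1) ^ (#(S ∩ T) - v) * ((Fintype.card F : ℤ) - 2) ^ v *
      mdsSupportCount (Fintype.card F) d (#(symmDiff S T) + v))

end Codewords

section CosetWeight

variable {F : Type*} [Field F] [Fintype F] [DecidableEq F] {n : ℕ} {C : Submodule F (Fin n → F)}
  {d : ℕ}

theorem numCodewordsOfWeight_eq_choose_mul (hmin : ∀ c ∈ C, c ≠ 0 → d ≤ hammingNorm c)
    (hMDS : d + Module.finrank F C = n + 1) (w : ℕ) :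
    (numCodewordsOfWeight C w : ℤ) = n.choose w * mdsSupportCount (Fintype.card F) d w := by
  classical
  have hfiber : numCodewordsOfWeight C w =
      ∑ S ∈ powersetCard w univ, #(codewordsWithSupport C S) := by
    rw [numCodewordsOfWeight, Set.ncard_eq_toFinset_card', Set.toFinset_ofPred,
      card_eq_sum_card_fiberwise (f := vecSupport) (t := powersetCard w univ)]
    · refine sum_congr rfl fun S hS ↦ congr_arg card ?_
      ext c
      have hcard : vecSupport c = S → hammingNorm c = w := by
        rintro rfl
        exact (mem_powersetCard.1 hS).2
      simp only [mem_codewordsWithSupport, mem_filter, mem_univ, true_and]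
      tauto
    · intro c hc
      exact mem_powersetCard.2 ⟨subset_univ _, ((mem_filter_univ c).1 hc).2⟩
  rw [hfiber, Nat.cast_sum, sum_congr rfl (g := fun _ ↦ mdsSupportCount (Fintype.card F) d w)]
  · simp
  · intro S hS
    rw [card_codewordsWithSupport hmin (by simpa using hMDS), (mem_powersetCard.1 hS).2]

theorem cosetWeight_eq_iff (hmin : ∀ c ∈ C, c ≠ 0 → d ≤ hammingNorm c) {W : ℕ} (hW : 2 * W < d)
    {x : Fin n → F} : cosetWeight C x = W ↔ ∃ c ∈ C, hammingNorm (x - c) = W := by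
  have hne : {m : ℕ | ∃ c ∈ C, hammingNorm (x - c) = m}.Nonempty := ⟨_, 0, C.zero_mem, rfl⟩
  refine ⟨fun h ↦ h ▸ Nat.sInf_mem hne, ?_⟩
  rintro ⟨c, hc, hcW⟩
  refine le_antisymm (Nat.sInf_le ⟨c, hc, hcW⟩) (le_csInf hne ?_)
  rintro m ⟨c', hc', rfl⟩
  by_contra! hlt
  have heq := eq_of_hammingNorm_sub_add_hammingNorm_sub_lt hmin hc hc' (x := x) (by lia)
  rw [← heq, hcW] at hlt
  exact hlt.false

open Classical in
theorem numVectorsCosetExact_eq_sum_card (hmin : ∀ c ∈ C, c ≠ 0 → d ≤ hammingNorm c) {W : ℕ}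
    (hW : 2 * W < d) (w : ℕ) :
    numVectorsCosetExact C w W = ∑ T ∈ powersetCard W univ, ∑ S ∈ powersetCard w univ,
      ∑ c with c ∈ C, #{x : Fin n → F | vecSupport x = S ∧ vecSupport (x - c) = T} := by
  have hset : {x : Fin n → F | hammingNorm x = w ∧ cosetWeight C x = W} =
      (({c | c ∈ C} : Finset (Fin n → F)).biUnion
        fun c ↦ {x | hammingNorm x = w ∧ hammingNorm (x - c) = W} : Finset (Fin n → F)) := by
    ext x
    simp only [cosetWeight_eq_iff hmin hW, Set.mem_ofPred_eq, coe_biUnion, Set.mem_iUnion, mem_coe,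
      mem_filter, mem_univ, true_and, exists_prop]
    tauto
  rw [numVectorsCosetExact, hset, Set.ncard_coe_finset, card_biUnion]
  · rw [← sum_product', sum_comm]
    refine sum_congr rfl fun c _ ↦ ?_
    rw [card_eq_sum_card_fiberwise (f := fun x ↦ (vecSupport (x - c), vecSupport x))
      (t := powersetCard W univ ×ˢ powersetCard w univ)]
    · refine sum_congr rfl fun P hP ↦ congr_arg card ?_
      ext x
      simp only [mem_product, mem_powersetCard, mem_filter, mem_univ, true_and, Prod.ext_iff,
        ← card_vecSupport] at hP ⊢
      grind
    · intro x hx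
      simpa [card_vecSupport, and_comm] using hx
  · intro c hc c' hc' hne
    refine disjoint_filter.2 fun x _ hx hx' ↦ hne ?_
    refine eq_of_hammingNorm_sub_add_hammingNorm_sub_lt hmin (x := x) (by simpa using hc)
      (by simpa using hc') ?_
    lia

theorem numVectorsCosetExact_eq_choose_mul_sum (hmin : ∀ c ∈ C, c ≠ 0 → d ≤ hammingNorm c)
    (hMDS : d + Module.finrank F C = n + 1) {W : ℕ} (hW : 2 * W < d) (w : ℕ) :
    (numVectorsCosetExact C w W : ℤ) = n.choose W * ∑ ij ∈ antidiagonal w,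
      W.choose ij.1 * (n - W).choose ij.2 *
        mdsPairCount (Fintype.card F) d ij.1 (W - ij.1 + ij.2) := by
  have hT (T : Finset (Fin n)) (hT : T ∈ powersetCard W univ) :
      ∑ S ∈ powersetCard w univ, mdsPairCount (Fintype.card F) d #(S ∩ T) #(symmDiff S T) =
        ∑ ij ∈ antidiagonal w, W.choose ij.1 * (n - W).choose ij.2 *
          mdsPairCount (Fintype.card F) d ij.1 (W - ij.1 + ij.2) := by
    have hTW : #T = W := (mem_powersetCard.1 hT).2
    have hsymm (S : Finset (Fin n)) : #(symmDiff S T) = W - #(S ∩ T) + #(S \ T) := by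
      rw [symmDiff, sup_eq_union, card_union_of_disjoint disjoint_sdiff_sdiff, add_comm,
        card_sdiff (s := S), hTW]
    simp only [hsymm]
    rw [sum_powersetCard_univ_inter_sdiff T w fun i j ↦
      mdsPairCount (Fintype.card F) d i (W - i + j), hTW, Fintype.card_fin]
    simp only [nsmul_eq_mul, Nat.cast_mul]
  rw [numVectorsCosetExact_eq_sum_card hmin hW]
  simp only [Nat.cast_sum, sum_card_filter_eq_mdsPairCount hmin
    (hMDS.trans (by rw [Fintype.card_fin]))]
  rw [sum_congr rfl hT, sum_const, card_powersetCard, card_univ, Fintype.card_fin, nsmul_eq_mul]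

end CosetWeight

section WeightTwo

theorem mdsPairCount_zero_left (q : ℤ) (d j : ℕ) :
    mdsPairCount q d 0 j = mdsSupportCount q d j := by
  simp [mdsPairCount]

theorem mdsPairCount_one_left (q : ℤ) (d j : ℕ) :
    mdsPairCount q d 1 j =
      (q - 1) * mdsSupportCount q d j + (q - 2) * mdsSupportCount q d (j + 1) := by
  simp [mdsPairCount, sum_range_succ]

theorem mdsPairCount_two_left (q : ℤ) (d j : ℕ) :
    mdsPairCount q d 2 j =
      (q - 1) ^ 2 * mdsSupportCount q d j +
        2 * (q - 1) * (q - 2) * mdsSupportCount q d (j + 1) +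
        (q - 2) ^ 2 * mdsSupportCount q d (j + 2) := by
  simp [mdsPairCount, sum_range_succ, mul_assoc]

theorem mdsPairCount_weight_two (q : ℤ) {d w t s : ℕ} (hd : 4 ≤ d) (hw : 3 ≤ w) (ht : t ≤ 2)
    (hts : t + s = w) :
    mdsPairCount q d t (2 - t + s) =
      (q - 1) ^ 2 * (mdsSupportCount q d w - (-1) ^ (w + d) * (w - 1).choose (d - 2)) +
        (q - 1) * (-1) ^ (w + d) * s.choose (d - 2) +
        if t = 2 then (q - 1) ^ 2 * (-1) ^ (w + d) * (w - 3).choose (d - 4) else 0 := by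
  obtain ⟨u, rfl⟩ := Nat.exists_eq_add_of_le' hw
  obtain ⟨e, rfl⟩ := Nat.exists_eq_add_of_le' hd
  have hsucc (j : ℕ) : mdsSupportCount q (e + 4) (j + 2) = (q - 1) *
      (mdsSupportCount q (e + 4) (j + 1) + (-1) ^ (j + e) * j.choose (e + 2)) := by
    rw [mdsSupportCount_succ q (by lia) (by lia)]
    simp only [Nat.add_sub_cancel, show e + 4 - 2 = e + 2 by lia]
    ring
  have hpascal : ((u + 2).choose (e + 2) : ℤ) =
      2 * (u + 1).choose (e + 2) - u.choose (e + 2) + u.choose e := by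
    rw [Nat.choose_succ_succ' (u + 1), Nat.choose_succ_succ' u, Nat.choose_succ_succ' u]
    push_cast
    ring
  have hsign : (-1 : ℤ) ^ (u + 3 + (e + 4)) = -(-1) ^ (u + e) := by ring
  simp only [hsign, show u + 3 - 1 = u + 2 by lia, show e + 4 - 2 = e + 2 by lia,
    Nat.add_sub_cancel]
  interval_cases t
  · obtain rfl : s = u + 3 := by lia
    rw [if_neg (by lia), show 2 - 0 + (u + 3) = u + 5 by lia, mdsPairCount_zero_left]
    linear_combination hsucc (u + 3) + (q - 1) * hsucc (u + 2)
  · obtain rfl : s = u + 2 := by lia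
    rw [if_neg (by lia), show 2 - 1 + (u + 2) = u + 3 by lia, mdsPairCount_one_left]
    linear_combination (q - 2) * hsucc (u + 2)
  · obtain rfl : s = u + 1 := by lia
    rw [if_pos rfl, show 2 - 2 + (u + 1) = u + 1 by lia, mdsPairCount_two_left]
    linear_combination
      -(q - 1) * hsucc u - (2 * q - 3) * hsucc (u + 1) - (q - 1) ^ 2 * (-1) ^ (u + e) * hpascal

theorem choose_mul_mdsPairCount_weight_two (q : ℤ) (m : ℕ) {d w t s : ℕ} (hd : 4 ≤ d) (hw : 3 ≤ w)
    (hts : t + s = w) :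
    (Nat.choose 2 t * m.choose s : ℤ) * mdsPairCount q d t (2 - t + s) =
      (Nat.choose 2 t * m.choose s : ℤ) *
          ((q - 1) ^ 2 * (mdsSupportCount q d w - (-1) ^ (w + d) * (w - 1).choose (d - 2))) +
        (Nat.choose 2 t * m.choose s * s.choose (d - 2) : ℤ) * ((q - 1) * (-1) ^ (w + d)) +
        if (t, s) = (2, w - 2) then
          m.choose (w - 2) * ((q - 1) ^ 2 * (-1) ^ (w + d) * (w - 3).choose (d - 4)) else 0 := by
  rcases le_or_gt t 2 with ht | ht
  · have hiff : (t, s) = (2, w - 2) ↔ t = 2 := by grind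
    rw [mdsPairCount_weight_two q hd hw ht hts]
    simp only [hiff]
    split_ifs with h
    · subst h
      obtain rfl : s = w - 2 := by lia
      simp only [Nat.choose_self, Nat.cast_one]
      ring
    · ring
  · have hne : (t, s) ≠ (2, w - 2) := by grind
    simp [Nat.choose_eq_zero_of_lt ht, hne]

theorem sum_antidiagonal_mdsPairCount_weight_two (q : ℤ) {n d w : ℕ} (hd : 4 ≤ d) (hw : 3 ≤ w)
    (hwn : w ≤ n) :
    ∑ ij ∈ antidiagonal w, (Nat.choose 2 ij.1 * (n - 2).choose ij.2 : ℤ) *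
        mdsPairCount q d ij.1 (2 - ij.1 + ij.2) =
      n.choose w *
          ((q - 1) ^ 2 * (mdsSupportCount q d w - (-1) ^ (w + d) * (w - 1).choose (d - 2))) +
        (n - 2).choose (d - 2) * (n - d + 2).choose (n - w) * ((q - 1) * (-1) ^ (w + d)) +
        (n - 2).choose (w - 2) * ((q - 1) ^ 2 * (-1) ^ (w + d) * (w - 3).choose (d - 4)) := by
  have hn : 2 + (n - 2) = n := by lia
  have hvandermonde : ∑ ij ∈ antidiagonal w, (Nat.choose 2 ij.1 * (n - 2).choose ij.2 : ℤ) =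
      n.choose w := by
    have h := Nat.add_choose_eq 2 (n - 2) w
    rw [hn] at h
    exact_mod_cast h.symm
  have hweighted : ∑ ij ∈ antidiagonal w,
      (Nat.choose 2 ij.1 * (n - 2).choose ij.2 * ij.2.choose (d - 2) : ℤ) =
        (n - 2).choose (d - 2) * (n - d + 2).choose (n - w) := by
    have h := sum_antidiagonal_choose_mul_choose_mul_choose (d - 2) (hwn.trans_eq hn.symm)
    rw [hn] at h
    rcases le_or_gt d n with hdn | hdn
    · rw [show n - (d - 2) = n - d + 2 by lia] at h
      exact_mod_cast h
    · have hzero : (n - 2).choose (d - 2) = 0 := Nat.choose_eq_zero_of_lt (by lia)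
      rw [hzero, zero_mul] at h
      rw [hzero, Nat.cast_zero, zero_mul]
      exact_mod_cast h
  have hmem : (2, w - 2) ∈ antidiagonal w := by
    rw [HasAntidiagonal.mem_antidiagonal]
    lia
  rw [sum_congr rfl fun ij hij ↦ choose_mul_mdsPairCount_weight_two q (n - 2) hd hw
      (HasAntidiagonal.mem_antidiagonal.1 hij), sum_add_distrib, sum_add_distrib, ← sum_mul,
    ← sum_mul, hvandermonde, hweighted, sum_ite_eq', if_pos hmem]

theorem numVectorsCosetExact_two_eq'_general {F : Type*} [Field F] [Fintype F] [DecidableEq F]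
    {n d w : ℕ} {C : Submodule F (Fin n → F)} (hmin : ∀ c ∈ C, c ≠ 0 → d ≤ hammingNorm c)
    (hMDS : d + Module.finrank F C = n + 1) (hd : 5 ≤ d) (hw : 3 ≤ w) (hwn : w ≤ n) :
    (numVectorsCosetExact C w 2 : ℤ) =
      (n.choose 2 : ℤ) * ((Fintype.card F : ℤ) - 1) ^ 2 *
        ((numCodewordsOfWeight C w : ℤ)
          - (-1 : ℤ) ^ (w + d) *
            ((n.choose w : ℤ) * ((w - 1).choose (d - 2) : ℤ)
              - ((n - 2).choose (w - 2) : ℤ) * ((w - 3).choose (d - 4) : ℤ)))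
      + (-1 : ℤ) ^ (w + d) * (n.choose 2 : ℤ) * ((Fintype.card F : ℤ) - 1) *
          ((n - d + 2).choose (n - w) : ℤ) * ((n - 2).choose (d - 2) : ℤ) := by
  rw [numVectorsCosetExact_eq_choose_mul_sum hmin hMDS (by lia),
    sum_antidiagonal_mdsPairCount_weight_two _ (by lia) hw hwn,
    numCodewordsOfWeight_eq_choose_mul hmin hMDS]
  ring

end WeightTwo

/-- **Integral weight spectrum of the weight-2 cosets of an MDS code** (Theorem 5.3(i),
eq. (5.9)).  For an `[n,k,d]_q` MDS code with `d ≥ 5` and `d-2 ≤ w ≤ n`,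
`A_w^Σ(V^{(2)}) = C(n,2)(q-1)²[ A_w(C)
  - (-1)^{w-d}( C(n,w)C(w-1,d-2) - C(n-2,w-2)C(w-3,d-4) ) ]
  + (-1)^{w-d} C(n,2)(q-1) C(n-d+2,n-w) C(n-2,d-2)`. -/
theorem numVectorsCosetExact_two_eq' {F : Type*} [Field F] [Fintype F] [DecidableEq F]
    (q n k d w : ℕ) (hq : Fintype.card F = q)
    (C : Submodule F (Fin n → F))
    (hk : Module.finrank F C = k) (hmin : HasMinDist C d) (hMDS : d + k = n + 1)
    (hd : 5 ≤ d) (hw1 : d - 2 ≤ w) (hwn : w ≤ n) :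
    (numVectorsCosetExact C w 2 : ℤ) =
      (n.choose 2 : ℤ) * ((q : ℤ) - 1) ^ 2 *
        ((numCodewordsOfWeight C w : ℤ)
          - (-1 : ℤ) ^ (w + d) *
            ((n.choose w : ℤ) * ((w - 1).choose (d - 2) : ℤ)
              - ((n - 2).choose (w - 2) : ℤ) * ((w - 3).choose (d - 4) : ℤ)))
      + (-1 : ℤ) ^ (w + d) * (n.choose 2 : ℤ) * ((q : ℤ) - 1) *
          ((n - d + 2).choose (n - w) : ℤ) * ((n - 2).choose (d - 2) : ℤ) := by
  subst hq hk
  exact numVectorsCosetExact_two_eq'_general hmin.1 hMDS hd (by lia) hwn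
end
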